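/- Let 𝒟 be regularly varying with exponent γ > 1 and let {G_n}_{n≥1} be generated by the erased configuration model with degree sequences IID(𝒟). If 1 < γ < 2 then for any K, δ > 0, lim_{n→∞} P(Σ_{k≥0} |f̂_n(k) − f_n(k)| > K n^{1−γ+δ}) = 0; if γ > 2 then for any K, δ > 0, lim_{n→∞} P(Σ_{k≥0} |f̂_n(k) − f_n(k)| > K n^{−1+δ}) = 0. -/

import Mathlib

open MeasureTheory Filter
open scoped ENNReal NNReal BigOperators

namespace ANNDPaper

/-- A function is slowly varying if `l (λ x) / l x → 1` as `x → ∞` for every `λ > 0`. -/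
def SlowlyVarying (l : ℝ → ℝ) : Prop :=
  ∀ lam : ℝ, 0 < lam → Tendsto (fun x => l (lam * x) / l x) atTop (nhds 1)

/-- A function is eventually monotone if it is monotone on some interval `[K, ∞)`. -/
def EventuallyMonotone (l : ℝ → ℝ) : Prop :=
  ∃ K : ℝ, MonotoneOn l (Set.Ici K) ∨ AntitoneOn l (Set.Ici K)

/-- Cumulative distribution function of a mass function on `ℕ`. -/
noncomputable def cdfOf (f : ℕ → ℝ) (k : ℕ) : ℝ := ∑ j ∈ Finset.range (k + 1), f j

/-- Kantorovich–Rubinstein distance between two mass functions on `ℕ`,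
valued in `ℝ≥0∞`. -/
noncomputable def d1 (f g : ℕ → ℝ) : ℝ≥0∞ :=
  ∑' k : ℕ, ENNReal.ofReal |cdfOf f k - cdfOf g k|

/-- Total variation distance between two mass functions on `ℕ`, valued in `ℝ≥0∞`. -/
noncomputable def dtv (f g : ℕ → ℝ) : ℝ≥0∞ :=
  (∑' k : ℕ, ENNReal.ofReal |f k - g k|) / 2

/-- Mean of a mass function on `ℕ`. -/
noncomputable def meanPMF (f : ℕ → ℝ) : ℝ := ∑' k : ℕ, (k : ℝ) * f k

/-- Size-biased version `f^*(k) = k f(k) / E[f]` of a mass function on `ℕ`. -/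
noncomputable def sizeBiased (f : ℕ → ℝ) (k : ℕ) : ℝ := (k : ℝ) * f k / meanPMF f

/-- `L_n`, the sum of the degrees. -/
def degSum {n : ℕ} (d : Fin n → ℕ) : ℕ := ∑ i, d i

/-- Empirical degree density `f_n(k)`. -/
noncomputable def empDens {n : ℕ} (d : Fin n → ℕ) (k : ℕ) : ℝ :=
  (∑ i, if d i = k then (1 : ℝ) else 0) / (n : ℝ)

/-- Size-biased empirical degree density `f_n^*(k)`. -/
noncomputable def empSB {n : ℕ} (d : Fin n → ℕ) (k : ℕ) : ℝ :=
  (∑ i, if d i = k then (k : ℝ) else 0) / (degSum d : ℝ)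

/-- Size-biased empirical cumulative distribution function `F_n^*(ℓ)`. -/
noncomputable def empSBcdf {n : ℕ} (d : Fin n → ℕ) (l : ℕ) : ℝ :=
  (∑ i, if d i ≤ l then (d i : ℝ) else 0) / (degSum d : ℝ)

/-- Empirical joint degree distribution `h_n(k, ℓ)` of a multigraph with degrees `d`
and edge counts `g` (self-loops counted twice). -/
noncomputable def jointDens {n : ℕ} (d : Fin n → ℕ) (g : Fin n → Fin n → ℕ) (k l : ℕ) : ℝ :=
  (∑ i, ∑ j, if d i = k ∧ d j = l then (g i j : ℝ) else 0) / (degSum d : ℝ)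

/-- Average nearest neighbor degree `Φ_n(k)`. -/
noncomputable def ANND {n : ℕ} (d : Fin n → ℕ) (g : Fin n → Fin n → ℕ) (k : ℕ) : ℝ :=
  if 0 < empDens d k then (∑' l : ℕ, jointDens d g k l * (l : ℝ)) / empSB d k else 0

/-- Average nearest neighbor rank `Θ_n(k)`. -/
noncomputable def ANNR {n : ℕ} (d : Fin n → ℕ) (g : Fin n → Fin n → ℕ) (k : ℕ) : ℝ :=
  if 0 < empDens d k then (∑' l : ℕ, jointDens d g k l * empSBcdf d l) / empSB d k else 0

/-- The degree of node `i` in a multigraph with edge counts `g` (self-loops counted twice). -/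
def degOf {n : ℕ} (g : Fin n → Fin n → ℕ) (i : Fin n) : ℕ := ∑ j, g i j

/-- Erased edge counts: self-loops removed, multiple edges merged. -/
def erase {n : ℕ} (g : Fin n → Fin n → ℕ) (i j : Fin n) : ℕ :=
  if i = j then 0 else min (g i j) 1

/-- Degrees after erasure. -/
def eraseDeg {n : ℕ} (g : Fin n → Fin n → ℕ) (i : Fin n) : ℕ := ∑ j, erase g i j

/-- The stubs (half-edges) attached to the nodes, given a degree sequence `d`. -/
abbrev Stubs {n : ℕ} (d : Fin n → ℕ) : Type := (i : Fin n) × Fin (d i)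

/-- A perfect matching of the stubs: a fixed-point-free involution. -/
def Matching {n : ℕ} (d : Fin n → ℕ) : Type :=
  {σ : Equiv.Perm (Stubs d) // ∀ s, σ s ≠ s ∧ σ (σ s) = s}

instance {n : ℕ} (d : Fin n → ℕ) : MeasurableSpace (Matching d) := ⊤

/-- The uniform probability measure on perfect matchings of the stubs. -/
noncomputable def uniformMatching {n : ℕ} (d : Fin n → ℕ) : Measure (Matching d) :=
  (Nat.card (Matching d) : ℝ≥0∞)⁻¹ • Measure.count

/-- The edge counts `G_{ij}` of the configuration-model multigraph determined by a
matching of the stubs: the number of stubs of `i` matched to stubs of `j`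
(self-loops are automatically counted twice). -/
def cmEdges {n : ℕ} (d : Fin n → ℕ) (σ : Matching d) (i j : Fin n) : ℕ :=
  (Finset.univ.filter (fun s : Fin (d i) => ((σ.1 ⟨i, s⟩).1 = j))).card

/-- Parity correction: add `1` to the last coordinate if the total sum is odd,
making the total even. -/
def parityFix (n : ℕ) (x : Fin n → ℕ) (i : Fin n) : ℕ :=
  if (i : ℕ) = n - 1 ∧ (∑ j, x j) % 2 = 1 then x i + 1 else x i

/-- The law of the degree sequence `IID(𝒟)` of length `n`, where `ν` is the law of `𝒟`:
i.i.d. samples with the last one corrected for parity. -/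
noncomputable def iidLaw (n : ℕ) (ν : Measure ℕ) : Measure (Fin n → ℕ) :=
  Measure.map (parityFix n) (Measure.pi fun _ : Fin n => ν)

/-- The joint law of (degree sequence, edge counts) in the configuration model of size `n`
with degree sequence `IID(𝒟)`, where `ν` is the law of `𝒟`: sample the degrees, then an
independent uniform perfect matching of the stubs. -/
noncomputable def cmLaw (n : ℕ) (ν : Measure ℕ) :
    Measure ((Fin n → ℕ) × (Fin n → Fin n → ℕ)) :=
  (iidLaw n ν).bind fun d => (uniformMatching d).map fun σ => (d, cmEdges d σ)

/-!
Conjugating a perfect matching by a transposition permutes the perfect matchings, so a given stub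
is equally likely to be matched with any other one. Hence two given stubs are matched with
probability at most `1 / (L - 1)`, and two given disjoint pairs of stubs are both matched with
probability at most `1 / ((L - 1) (L - 3))`. As `L ≥ n`, this bounds the probability of a loop at
`i` by a multiple of `D_i² / n`, and that of a multiple edge between `i` and `j` by a multiple of
`(D_i D_j / n)²`. Interpolating with the trivial bound `1` replaces the squares by powers
`p ≤ 2` for which `D ^ p` is integrable. The erasure error is at most `2 / n` times the number of
erased pairs, so Markov's inequality bounds its conditional tail probability given the degrees.
Potter's bound for slowly varying functions supplies the moments of all orders `p < γ`.
-/

open Finset (univ)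
open ProbabilityTheory (uniformOn)

/-! ### Uniform perfect matchings -/

section Matching

variable {n : ℕ} {d : Fin n → ℕ}

/-- The relabelling of the stubs of a matching by a permutation `τ`, that is, the conjugate of
the matching by `τ`. -/
def Matching.conj (τ : Equiv.Perm (Stubs d)) (σ : Matching d) : Matching d :=
  ⟨τ * σ.1 * τ⁻¹, fun s => by
    constructor
    · simpa [Equiv.Perm.mul_apply, ← Equiv.Perm.eq_inv_iff_eq] using (σ.2 (τ⁻¹ s)).1
    · simp [Equiv.Perm.mul_apply, (σ.2 _).2]⟩

theorem Matching.conj_apply_apply (τ : Equiv.Perm (Stubs d)) (σ : Matching d) (s : Stubs d) :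
    (σ.conj τ).1 (τ s) = τ (σ.1 s) := by
  simp [Matching.conj]

theorem Matching.conj_injective (τ : Equiv.Perm (Stubs d)) :
    Function.Injective (Matching.conj τ) := fun _ _ h =>
  Subtype.ext (mul_left_cancel (mul_right_cancel (congrArg Subtype.val h)))

instance : Finite (Matching d) := Subtype.finite

instance : DiscreteMeasurableSpace (Matching d) := ⟨fun _ => MeasurableSpace.measurableSet_top⟩

theorem uniformMatching_eq_uniformOn (d : Fin n → ℕ) :
    uniformMatching d = uniformOn Set.univ := by
  rw [uniformMatching, uniformOn, ProbabilityTheory.cond, Measure.restrict_univ,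
    Measure.count_univ, ENat.card_eq_coe_natCard, ENat.toENNReal_coe]

instance (d : Fin n → ℕ) : IsZeroOrProbabilityMeasure (uniformMatching d) := by
  rw [uniformMatching_eq_uniformOn, uniformOn]
  infer_instance

theorem uniformMatching_real_image_conj (τ : Equiv.Perm (Stubs d)) (A : Set (Matching d)) :
    (uniformMatching d).real (Matching.conj τ '' A) = (uniformMatching d).real A := by
  simp only [Measure.real, uniformMatching, Measure.smul_apply,
    Measure.count_injective_image (Matching.conj_injective τ)]

theorem card_mul_uniformMatching_real_inter_le {A : Set (Matching d)} {s t : Stubs d}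
    {T : Finset (Stubs d)} (hst : s ≠ t) (hsT : s ∉ T)
    (hA : ∀ t' ∈ T, ∀ σ ∈ A, σ.1 s = t → σ.conj (Equiv.swap t t') ∈ A) :
    T.card * (uniformMatching d).real (A ∩ {σ | σ.1 s = t}) ≤ (uniformMatching d).real A := by
  have swap_le : ∀ t' ∈ T, (uniformMatching d).real (A ∩ {σ | σ.1 s = t}) ≤
      (uniformMatching d).real (A ∩ {σ | σ.1 s = t'}) := by
    intro t' ht'
    rw [← uniformMatching_real_image_conj (Equiv.swap t t')]
    refine measureReal_mono ?_
    rintro _ ⟨σ, ⟨hσA, hσ⟩, rfl⟩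
    refine ⟨hA t' ht' σ hσA hσ, ?_⟩
    have hswap : Equiv.swap t t' s = s :=
      Equiv.swap_apply_of_ne_of_ne hst (ne_of_mem_of_not_mem ht' hsT).symm
    have hconj := σ.conj_apply_apply (Equiv.swap t t') s
    rwa [hswap, show σ.1 s = t from hσ, Equiv.swap_apply_left] at hconj
  calc T.card * (uniformMatching d).real (A ∩ {σ | σ.1 s = t})
      ≤ ∑ t' ∈ T, (uniformMatching d).real (A ∩ {σ | σ.1 s = t'}) := by
        simpa only [nsmul_eq_mul] using T.card_nsmul_le_sum _ _ swap_le
    _ = (uniformMatching d).real (⋃ t' ∈ T, A ∩ {σ | σ.1 s = t'}) := by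
        refine (measureReal_biUnion_finset ?_ fun _ _ => MeasurableSet.of_discrete).symm
        exact fun _ _ _ _ hne => Set.disjoint_left.mpr fun σ h h' => hne (h.2.symm.trans h'.2)
    _ ≤ (uniformMatching d).real A :=
        measureReal_mono (Set.iUnion₂_subset fun _ _ => Set.inter_subset_left)

theorem card_stubs (d : Fin n → ℕ) : Fintype.card (Stubs d) = degSum d := by
  simp [Stubs, degSum]

theorem uniformMatching_real_pair_le {s t : Stubs d} (hst : s ≠ t) :
    (uniformMatching d).real {σ | σ.1 s = t} ≤ ((degSum d : ℝ) - 1)⁻¹ := by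
  have hcard : (univ.erase s).card + 1 = degSum d := by
    rw [Finset.card_erase_add_one (Finset.mem_univ s), Finset.card_univ, card_stubs]
  have hpos : 0 < (univ.erase s).card :=
    Finset.card_pos.mpr ⟨t, Finset.mem_erase.mpr ⟨hst.symm, Finset.mem_univ t⟩⟩
  have hmul := card_mul_uniformMatching_real_inter_le (A := Set.univ) hst
    (Finset.notMem_erase s univ) fun _ _ _ _ _ => Set.mem_univ _
  rw [Set.univ_inter] at hmul
  rw [← hcard, Nat.cast_add_one, add_sub_cancel_right, ← one_div, le_div_iff₀' (by positivity)]
  exact hmul.trans measureReal_le_one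

theorem uniformMatching_real_pair_pair_le {s t u v : Stubs d} (hst : s ≠ t) (hsu : s ≠ u)
    (hsv : s ≠ v) (htu : t ≠ u) (htv : t ≠ v) (huv : u ≠ v) :
    (uniformMatching d).real {σ | σ.1 s = t ∧ σ.1 u = v} ≤
      (((degSum d : ℝ) - 1) * ((degSum d : ℝ) - 3))⁻¹ := by
  set T : Finset (Stubs d) := univ \ {s, t, u} with hT
  have hcard : T.card + 3 = degSum d := by
    have hle := Finset.card_le_univ ({s, t, u} : Finset (Stubs d))
    rw [← card_stubs, hT, Finset.card_univ_sdiff]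
    rw [Finset.card_eq_three.mpr ⟨s, t, u, hst, hsu, htu, rfl⟩] at hle ⊢
    omega
  have hpos : 0 < T.card := Finset.card_pos.mpr ⟨v, by simp [hT, hsv.symm, htv.symm, huv.symm]⟩
  have hmul := card_mul_uniformMatching_real_inter_le (A := {σ | σ.1 s = t}) (T := T) huv
    (by simp [hT]) (fun t' ht' σ hσ _ => by
      simp only [hT, Finset.mem_sdiff, Finset.mem_univ, Finset.mem_insert, Finset.mem_singleton,
        true_and, not_or] at ht'
      have hconj := σ.conj_apply_apply (Equiv.swap v t') s
      rwa [Equiv.swap_apply_of_ne_of_ne hsv (Ne.symm ht'.1), show σ.1 s = t from hσ,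
        Equiv.swap_apply_of_ne_of_ne htv (Ne.symm ht'.2.1)] at hconj)
  have hT3 : (degSum d : ℝ) - 3 = T.card := by
    rw [← hcard]; push_cast; ring
  rw [mul_inv, ← div_eq_mul_inv, hT3, le_div_iff₀' (by positivity)]
  exact hmul.trans (uniformMatching_real_pair_le hst)

end Matching

/-! ### Loops and multiple edges of the configuration model -/

section Multigraph

variable {n : ℕ} {d : Fin n → ℕ}

theorem exists_eq_mk_of_fst_eq {ι : Type*} {β : ι → Type*} {x : Sigma β} {i : ι}
    (h : x.1 = i) : ∃ b : β i, x = ⟨i, b⟩ := by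
  subst h
  exact ⟨x.2, rfl⟩

theorem exists_pair_of_cmEdges_self_pos {σ : Matching d} {i : Fin n} (h : 0 < cmEdges d σ i i) :
    ∃ s t : Fin (d i), s ≠ t ∧ σ.1 ⟨i, s⟩ = ⟨i, t⟩ := by
  obtain ⟨s, hs⟩ := Finset.card_pos.mp h
  obtain ⟨t, ht⟩ := exists_eq_mk_of_fst_eq (Finset.mem_filter.mp hs).2
  exact ⟨s, t, fun hst => (σ.2 ⟨i, s⟩).1 (hst ▸ ht), ht⟩

theorem exists_pairs_of_one_lt_cmEdges {σ : Matching d} {i j : Fin n} (h : 1 < cmEdges d σ i j) :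
    ∃ (s u : Fin (d i)) (t v : Fin (d j)), s ≠ u ∧ t ≠ v ∧
      σ.1 ⟨i, s⟩ = ⟨j, t⟩ ∧ σ.1 ⟨i, u⟩ = ⟨j, v⟩ := by
  obtain ⟨s, hs, u, hu, hsu⟩ := Finset.one_lt_card.mp h
  obtain ⟨t, ht⟩ := exists_eq_mk_of_fst_eq (Finset.mem_filter.mp hs).2
  obtain ⟨v, hv⟩ := exists_eq_mk_of_fst_eq (Finset.mem_filter.mp hu).2
  refine ⟨s, u, t, v, hsu, ?_, ht, hv⟩
  rintro rfl
  exact hsu (by simpa using σ.1.injective (ht.trans hv.symm))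

theorem uniformMatching_real_cmEdges_self_pos_le (hd : 1 ≤ degSum d) (i : Fin n) :
    (uniformMatching d).real {σ | 0 < cmEdges d σ i i} ≤
      (d i : ℝ) ^ 2 * ((degSum d : ℝ) - 1)⁻¹ := by
  set Q := (univ : Finset (Fin (d i))).offDiag with hQ
  have hd' : (0 : ℝ) ≤ (degSum d : ℝ) - 1 := sub_nonneg.mpr (by exact_mod_cast hd)
  have hcard : Q.card ≤ d i ^ 2 := by
    simp [hQ, Finset.offDiag_card, sq]
  calc (uniformMatching d).real {σ | 0 < cmEdges d σ i i}
      ≤ (uniformMatching d).real (⋃ q ∈ Q, {σ | σ.1 ⟨i, q.1⟩ = ⟨i, q.2⟩}) := by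
        refine measureReal_mono (fun σ hσ => ?_) (measure_ne_top _ _)
        obtain ⟨s, t, hst, h⟩ := exists_pair_of_cmEdges_self_pos hσ
        exact Set.mem_biUnion (x := (s, t)) (by simp [hQ, hst]) h
    _ ≤ ∑ q ∈ Q, (uniformMatching d).real {σ | σ.1 ⟨i, q.1⟩ = ⟨i, q.2⟩} :=
        measureReal_biUnion_finset_le _ _
    _ ≤ Q.card * ((degSum d : ℝ) - 1)⁻¹ := by
        rw [← nsmul_eq_mul]
        refine Finset.sum_le_card_nsmul _ _ _ fun q hq => uniformMatching_real_pair_le ?_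
        simpa [hQ] using hq
    _ ≤ (d i : ℝ) ^ 2 * ((degSum d : ℝ) - 1)⁻¹ := by
        gcongr
        exact_mod_cast hcard

theorem uniformMatching_real_one_lt_cmEdges_le (hd : 3 ≤ degSum d) {i j : Fin n} (hij : i ≠ j) :
    (uniformMatching d).real {σ | 1 < cmEdges d σ i j} ≤
      ((d i : ℝ) * d j) ^ 2 * (((degSum d : ℝ) - 1) * ((degSum d : ℝ) - 3))⁻¹ := by
  set Q : Finset ((Fin (d i) × Fin (d i)) × (Fin (d j) × Fin (d j))) :=
    univ.offDiag ×ˢ univ.offDiag with hQ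
  have hd' : (3 : ℝ) ≤ degSum d := by exact_mod_cast hd
  have hcard : Q.card ≤ (d i * d j) ^ 2 := by
    rw [hQ, Finset.card_product, mul_pow]
    gcongr <;> simp [Finset.offDiag_card, sq]
  calc (uniformMatching d).real {σ | 1 < cmEdges d σ i j}
      ≤ (uniformMatching d).real
          (⋃ q ∈ Q, {σ | σ.1 ⟨i, q.1.1⟩ = ⟨j, q.2.1⟩ ∧ σ.1 ⟨i, q.1.2⟩ = ⟨j, q.2.2⟩}) := by
        refine measureReal_mono (fun σ hσ => ?_) (measure_ne_top _ _)
        obtain ⟨s, u, t, v, hsu, htv, h⟩ := exists_pairs_of_one_lt_cmEdges hσ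
        exact Set.mem_biUnion (x := ((s, u), (t, v))) (by simp [hQ, hsu, htv]) h
    _ ≤ ∑ q ∈ Q, (uniformMatching d).real
          {σ | σ.1 ⟨i, q.1.1⟩ = ⟨j, q.2.1⟩ ∧ σ.1 ⟨i, q.1.2⟩ = ⟨j, q.2.2⟩} :=
        measureReal_biUnion_finset_le _ _
    _ ≤ Q.card * (((degSum d : ℝ) - 1) * ((degSum d : ℝ) - 3))⁻¹ := by
        rw [← nsmul_eq_mul]
        refine Finset.sum_le_card_nsmul _ _ _ fun q hq => ?_
        have hne : q.1.1 ≠ q.1.2 ∧ q.2.1 ≠ q.2.2 := by simpa [hQ] using hq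
        apply uniformMatching_real_pair_pair_le <;> simp [hij, hij.symm, hne.1, hne.2]
    _ ≤ ((d i : ℝ) * d j) ^ 2 * (((degSum d : ℝ) - 1) * ((degSum d : ℝ) - 3))⁻¹ := by
        have : 0 ≤ ((degSum d : ℝ) - 1) * ((degSum d : ℝ) - 3) :=
          mul_nonneg (by linarith) (by linarith)
        gcongr
        exact_mod_cast hcard

end Multigraph

/-! ### The effect of the erasure on the degree density -/

section Erasure

variable {n : ℕ}

/-- The distance `∑ₖ |f̂_n(k) - f_n(k)|` between the degree densities of the multigraph with
prescribed degrees `d` and edge counts `g`, before and after erasure. -/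
noncomputable def erasureError (d : Fin n → ℕ) (g : Fin n → Fin n → ℕ) : ℝ :=
  ∑' k : ℕ, |empDens (eraseDeg g) k - empDens d k|

/-- The ordered pairs of nodes whose edge count is changed by the erasure; a loop at `i` is
recorded as the pair `(i, i)`. -/
def erasedPairs (g : Fin n → Fin n → ℕ) : Finset (Fin n × Fin n) :=
  {q | erase g q.1 q.2 ≠ g q.1 q.2}

theorem self_mem_erasedPairs {g : Fin n → Fin n → ℕ} {i : Fin n} :
    (i, i) ∈ erasedPairs g ↔ 0 < g i i := by
  rw [erasedPairs, Finset.mem_filter_univ, erase, if_pos rfl, ne_comm, Nat.pos_iff_ne_zero]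

theorem mem_erasedPairs_of_ne {g : Fin n → Fin n → ℕ} {i j : Fin n} (hij : i ≠ j) :
    (i, j) ∈ erasedPairs g ↔ 1 < g i j := by
  rw [erasedPairs, Finset.mem_filter_univ, erase, if_neg hij]
  lia

theorem tsum_abs_empDens_sub_le (a b : Fin n → ℕ) :
    ∑' k : ℕ, |empDens a k - empDens b k| ≤ 2 / n * ({i | a i ≠ b i} : Finset (Fin n)).card := by
  set D : Finset (Fin n) := {i | a i ≠ b i} with hD
  set g : ℕ → ℝ := fun k =>
    (∑ i ∈ D, ((if k = a i then (1 : ℝ) else 0) + if k = b i then (1 : ℝ) else 0)) / n with hg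
  have hsum : HasSum g (2 / n * D.card) := by
    have hval : (2 / n * D.card : ℝ) = (∑ _i ∈ D, (1 + 1 : ℝ)) / n := by
      rw [Finset.sum_const, nsmul_eq_mul]
      ring
    rw [hval]
    exact (hasSum_sum fun i _ =>
      (hasSum_ite_eq (a i) (1 : ℝ)).add (hasSum_ite_eq (b i) (1 : ℝ))).div_const (n : ℝ)
  have hle : ∀ k, |empDens a k - empDens b k| ≤ g k := by
    intro k
    simp only [hg, hD, Finset.sum_filter]
    rw [empDens, empDens, ← sub_div, abs_div, Nat.abs_cast, ← Finset.sum_sub_distrib]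
    gcongr
    refine (Finset.abs_sum_le_sum_abs _ _).trans (Finset.sum_le_sum fun i _ => ?_)
    rcases eq_or_ne (a i) (b i) with h | h
    · simp [h]
    · simp only [if_pos h, @eq_comm _ k]
      split_ifs <;> norm_num
  have hsummable : Summable fun k => |empDens a k - empDens b k| :=
    .of_nonneg_of_le (fun _ => abs_nonneg _) hle hsum.summable
  exact (hsummable.tsum_le_tsum hle hsum.summable).trans_eq hsum.tsum_eq

theorem card_eraseDeg_ne_degOf_le (g : Fin n → Fin n → ℕ) :
    ({i | eraseDeg g i ≠ degOf g i} : Finset (Fin n)).card ≤ (erasedPairs g).card := by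
  have hsub : ({i | eraseDeg g i ≠ degOf g i} : Finset (Fin n)) ⊆
      (erasedPairs g).image Prod.fst := by
    intro i hi
    obtain ⟨j, hj⟩ : ∃ j, erase g i j ≠ g i j := by
      by_contra! h
      exact (Finset.mem_filter.mp hi).2 (Finset.sum_congr rfl fun j _ => h j)
    exact Finset.mem_image.mpr ⟨(i, j), by simpa [erasedPairs] using hj, rfl⟩
  exact (Finset.card_le_card hsub).trans Finset.card_image_le

theorem erasureError_degOf_le (g : Fin n → Fin n → ℕ) :
    erasureError (degOf g) g ≤ 2 / n * (erasedPairs g).card := by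
  refine (tsum_abs_empDens_sub_le _ _).trans ?_
  gcongr
  exact card_eraseDeg_ne_degOf_le g

theorem degOf_cmEdges (d : Fin n → ℕ) (σ : Matching d) : degOf (cmEdges d σ) = d := by
  ext i
  rw [degOf]
  unfold cmEdges
  rw [← Finset.card_eq_sum_card_fiberwise fun _ _ => Finset.mem_coe.mpr (Finset.mem_univ _)]
  simp

end Erasure

/-! ### The expected number of erased pairs -/

section ErasedPairs

variable {n : ℕ} {d : Fin n → ℕ} {p N : ℝ}

theorem integral_card_eq_sum_measureReal {Ω ι : Type*} [Fintype ι] [MeasurableSpace Ω]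
    {μ : Measure Ω} [IsFiniteMeasure μ] {A : Ω → Finset ι}
    (hA : ∀ i, MeasurableSet {ω | i ∈ A ω}) :
    ∫ ω, ((A ω).card : ℝ) ∂μ = ∑ i, μ.real {ω | i ∈ A ω} := by
  classical
  have hcard : ∀ ω, ((A ω).card : ℝ) = ∑ i, {ω | i ∈ A ω}.indicator 1 ω := fun ω => by
    simp [Set.indicator_apply]
  simp_rw [hcard]
  rw [integral_finsetSum _ fun i _ => (integrable_const 1).indicator (hA i)]
  simp_rw [integral_indicator_one (hA _)]

theorem le_mul_rpow_of_le_mul {r C y q : ℝ} (hC : 1 ≤ C) (hy : 0 ≤ y) (hq₀ : 0 ≤ q) (hq₁ : q ≤ 1)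
    (hr : r ≤ 1) (hry : r ≤ C * y) : r ≤ C * y ^ q := by
  rcases le_total y 1 with h | h
  · exact hry.trans (by gcongr; exact Real.self_le_rpow_of_le_one hy h hq₁)
  · exact hr.trans (one_le_mul_of_one_le_of_one_le hC (Real.one_le_rpow h hq₀))

theorem uniformMatching_real_self_mem_erasedPairs_le (hp₀ : 0 ≤ p) (hp₂ : p ≤ 2) (hN : 4 ≤ N)
    (hd : N ≤ degSum d) (i : Fin n) :
    (uniformMatching d).real {σ | (i, i) ∈ erasedPairs (cmEdges d σ)} ≤
      6 * ((d i : ℝ) ^ p * N ^ (-p / 2)) := by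
  simp_rw [self_mem_erasedPairs]
  have hdeg : 1 ≤ degSum d := by exact_mod_cast show (1 : ℝ) ≤ degSum d by linarith
  have hinv : ((degSum d : ℝ) - 1)⁻¹ ≤ 6 * N⁻¹ := by
    rw [← div_eq_mul_inv, inv_le_comm₀ (by linarith) (by positivity), inv_div]
    linarith
  have hlin : (uniformMatching d).real {σ | 0 < cmEdges d σ i i} ≤ 6 * ((d i : ℝ) ^ 2 * N⁻¹) := by
    calc _ ≤ (d i : ℝ) ^ 2 * ((degSum d : ℝ) - 1)⁻¹ :=
          uniformMatching_real_cmEdges_self_pos_le hdeg i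
      _ ≤ (d i : ℝ) ^ 2 * (6 * N⁻¹) := by gcongr
      _ = _ := by ring
  refine (le_mul_rpow_of_le_mul (q := p / 2) (by norm_num) (by positivity) (by linarith)
    (by linarith) measureReal_le_one hlin).trans_eq ?_
  rw [Real.mul_rpow (by positivity) (by positivity), Real.inv_rpow (by positivity),
    ← Real.rpow_neg (by positivity), ← Real.rpow_natCast_mul (by positivity), neg_div]
  congr 3
  push_cast
  ring

theorem uniformMatching_real_mem_erasedPairs_le (hp₀ : 0 ≤ p) (hp₂ : p ≤ 2) (hN : 4 ≤ N)
    (hd : N ≤ degSum d) {i j : Fin n} (hij : i ≠ j) :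
    (uniformMatching d).real {σ | (i, j) ∈ erasedPairs (cmEdges d σ)} ≤
      6 * ((d i : ℝ) ^ p * (d j : ℝ) ^ p * N ^ (-p)) := by
  simp_rw [mem_erasedPairs_of_ne hij]
  have hdeg : 3 ≤ degSum d := by exact_mod_cast show (3 : ℝ) ≤ degSum d by linarith
  have hinv : (((degSum d : ℝ) - 1) * ((degSum d : ℝ) - 3))⁻¹ ≤ 6 * (N ^ 2)⁻¹ := by
    rw [← div_eq_mul_inv, inv_le_comm₀ (by nlinarith) (by positivity), inv_div]
    nlinarith
  have hlin : (uniformMatching d).real {σ | 1 < cmEdges d σ i j} ≤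
      6 * ((d i : ℝ) * d j * N⁻¹) ^ 2 := by
    calc _ ≤ ((d i : ℝ) * d j) ^ 2 * (((degSum d : ℝ) - 1) * ((degSum d : ℝ) - 3))⁻¹ :=
          uniformMatching_real_one_lt_cmEdges_le hdeg hij
      _ ≤ ((d i : ℝ) * d j) ^ 2 * (6 * (N ^ 2)⁻¹) := by gcongr
      _ = _ := by ring
  refine (le_mul_rpow_of_le_mul (q := p / 2) (by norm_num) (by positivity) (by linarith)
    (by linarith) measureReal_le_one hlin).trans_eq ?_
  rw [← Real.rpow_natCast_mul (by positivity), Nat.cast_two, mul_div_cancel₀ _ two_ne_zero,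
    Real.mul_rpow (by positivity) (by positivity), Real.mul_rpow (by positivity) (by positivity),
    Real.inv_rpow (by positivity), ← Real.rpow_neg (by positivity)]

theorem natCast_le_sum_rpow (hd : ∀ i, 1 ≤ d i) (hp : 0 ≤ p) : (n : ℝ) ≤ ∑ i, (d i : ℝ) ^ p := by
  have : ∀ i ∈ univ, (1 : ℝ) ≤ (d i : ℝ) ^ p := fun i _ =>
    Real.one_le_rpow (by exact_mod_cast hd i) hp
  simpa using univ.card_nsmul_le_sum _ _ this

theorem integral_card_erasedPairs_le (hn : 4 ≤ n) (hd : ∀ i, 1 ≤ d i) (hp₀ : 0 ≤ p)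
    (hp₂ : p ≤ 2) :
    ∫ σ, ((erasedPairs (cmEdges d σ)).card : ℝ) ∂uniformMatching d ≤
      12 * (∑ i, (d i : ℝ) ^ p) ^ 2 * (n : ℝ) ^ (-p) := by
  have hn4 : (4 : ℝ) ≤ n := by exact_mod_cast hn
  have hdeg : (n : ℝ) ≤ degSum d := by simpa [degSum] using natCast_le_sum_rpow hd zero_le_one
  set S := ∑ i, (d i : ℝ) ^ p with hS
  have hnS : (n : ℝ) ≤ S := natCast_le_sum_rpow hd hp₀
  have hpair : ∀ i j, (uniformMatching d).real {σ | (i, j) ∈ erasedPairs (cmEdges d σ)} ≤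
      6 * ((d i : ℝ) ^ p * (d j : ℝ) ^ p * (n : ℝ) ^ (-p)) +
        if i = j then 6 * ((d i : ℝ) ^ p * (n : ℝ) ^ (-p / 2)) else 0 := by
    intro i j
    split_ifs with hij
    · subst hij
      exact (uniformMatching_real_self_mem_erasedPairs_le hp₀ hp₂ hn4 hdeg i).trans
        (le_add_of_nonneg_left (by positivity))
    · rw [add_zero]
      exact uniformMatching_real_mem_erasedPairs_le hp₀ hp₂ hn4 hdeg hij
  have hpow : (n : ℝ) ^ (-p / 2) ≤ n * (n : ℝ) ^ (-p) := by
    nth_rw 2 [← Real.rpow_one (n : ℝ)]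
    rw [← Real.rpow_add (by positivity)]
    exact Real.rpow_le_rpow_of_exponent_le (by linarith) (by linarith)
  rw [integral_card_eq_sum_measureReal fun _ => .of_discrete, Fintype.sum_prod_type]
  calc _ ≤ ∑ i, ∑ j, (6 * ((d i : ℝ) ^ p * (d j : ℝ) ^ p * (n : ℝ) ^ (-p)) +
        if i = j then 6 * ((d i : ℝ) ^ p * (n : ℝ) ^ (-p / 2)) else 0) :=
        Finset.sum_le_sum fun i _ => Finset.sum_le_sum fun j _ => hpair i j
    _ = 6 * (S * S * (n : ℝ) ^ (-p)) + 6 * (S * (n : ℝ) ^ (-p / 2)) := by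
        rw [hS, Finset.sum_mul_sum]
        simp only [Finset.sum_add_distrib, Finset.sum_ite_eq, Finset.mem_univ, if_true,
          Finset.sum_mul, Finset.mul_sum]
    _ ≤ 6 * (S * S * (n : ℝ) ^ (-p)) + 6 * (S * (S * (n : ℝ) ^ (-p))) := by
        gcongr
        exact hpow.trans (by gcongr)
    _ = 12 * S ^ 2 * (n : ℝ) ^ (-p) := by ring

-- Bounding the conditional probability `r ≤ 1` by `√r` makes the bound linear in the power sum,
-- so that averaging over the degrees only takes a `p`-th moment instead of a `2p`-th one.
theorem uniformMatching_real_lt_erasureError_le (hn : 4 ≤ n) (hd : ∀ i, 1 ≤ d i) (hp₀ : 0 ≤ p)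
    (hp₂ : p ≤ 2) {t : ℝ} (ht : 0 < t) :
    (uniformMatching d).real {σ | t < erasureError d (cmEdges d σ)} ≤
      √(24 * (n : ℝ) ^ (-p - 1) / t) * ∑ i, (d i : ℝ) ^ p := by
  have hn₀ : (0 : ℝ) < n := by positivity
  set S := ∑ i, (d i : ℝ) ^ p
  have hS : 0 ≤ S := Finset.sum_nonneg fun _ _ => by positivity
  set r := (uniformMatching d).real {σ | t < erasureError d (cmEdges d σ)}
  have hmarkov : t * r ≤ 24 * S ^ 2 * (n : ℝ) ^ (-p - 1) := by
    calc t * r ≤ t * (uniformMatching d).real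
          {σ | t ≤ 2 / n * ((erasedPairs (cmEdges d σ)).card : ℝ)} := by
          refine mul_le_mul_of_nonneg_left
            (measureReal_mono (fun σ (hσ : t < _) => ?_) (measure_ne_top _ _)) ht.le
          have herr := erasureError_degOf_le (cmEdges d σ)
          rw [degOf_cmEdges] at herr
          exact hσ.le.trans herr
      _ ≤ ∫ σ, 2 / n * ((erasedPairs (cmEdges d σ)).card : ℝ) ∂uniformMatching d :=
          mul_meas_ge_le_integral_of_nonneg (ae_of_all _ fun σ => by positivity) .of_finite t
      _ ≤ 2 / n * (12 * S ^ 2 * (n : ℝ) ^ (-p)) := by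
          rw [integral_const_mul]
          gcongr
          exact integral_card_erasedPairs_le hn hd hp₀ hp₂
      _ = 24 * S ^ 2 * (n : ℝ) ^ (-p - 1) := by
          rw [Real.rpow_sub_one hn₀.ne']
          ring
  calc r ≤ √r := Real.le_sqrt_of_sq_le (pow_le_of_le_one measureReal_nonneg measureReal_le_one
        two_ne_zero)
    _ ≤ √(24 * (n : ℝ) ^ (-p - 1) / t * S ^ 2) := by
        gcongr
        rw [div_mul_eq_mul_div, le_div_iff₀' ht]
        linarith
    _ = √(24 * (n : ℝ) ^ (-p - 1) / t) * S := by
        rw [Real.sqrt_mul (by positivity), Real.sqrt_sq hS]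

end ErasedPairs

/-! ### Moments of regularly varying distributions -/

section RegularVariation

variable {l : ℝ → ℝ}

theorem abs_two_pow_mul_le_of_doubling {x₀ c : ℝ} (hx₀ : 0 < x₀) (hc : 0 ≤ c)
    (hdouble : ∀ x, x₀ ≤ x → |l (2 * x)| ≤ c * |l x|) {y : ℝ} (hy : x₀ ≤ y) (j : ℕ) :
    |l (2 ^ j * y)| ≤ c ^ j * |l y| := by
  induction j with
  | zero => simp
  | succ j ih =>
    have hle : x₀ ≤ 2 ^ j * y := hy.trans
      (le_mul_of_one_le_left (hx₀.le.trans hy) (one_le_pow₀ one_le_two))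
    calc |l (2 ^ (j + 1) * y)| = |l (2 * (2 ^ j * y))| := by rw [pow_succ', mul_assoc]
      _ ≤ c * |l (2 ^ j * y)| := hdouble _ hle
      _ ≤ c * (c ^ j * |l y|) := by gcongr
      _ = c ^ (j + 1) * |l y| := by ring

theorem abs_le_mul_rpow_of_doubling {x₀ M ε : ℝ} (hx₀ : 0 < x₀) (hε : 0 ≤ ε)
    (hM : ∀ x ∈ Set.Icc x₀ (2 * x₀), |l x| ≤ M)
    (hdouble : ∀ x, x₀ ≤ x → |l (2 * x)| ≤ 2 ^ ε * |l x|) {x : ℝ} (hx : x₀ ≤ x) :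
    |l x| ≤ M * (x / x₀) ^ ε := by
  obtain ⟨j, hj, hj'⟩ := exists_nat_pow_near ((one_le_div hx₀).mpr hx) one_lt_two
  rw [div_lt_iff₀ hx₀] at hj'
  have hpow : (0 : ℝ) < 2 ^ j := by positivity
  have hy : x / 2 ^ j ∈ Set.Icc x₀ (2 * x₀) := by
    rw [Set.mem_Icc, le_div_iff₀ hpow, div_le_iff₀ hpow]
    rw [le_div_iff₀ hx₀] at hj
    rw [pow_succ] at hj'
    exact ⟨by linarith, by linarith⟩
  have hM₀ : 0 ≤ M := (abs_nonneg _).trans (hM _ hy)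
  calc |l x| = |l (2 ^ j * (x / 2 ^ j))| := by rw [mul_div_cancel₀ _ hpow.ne']
    _ ≤ (2 ^ ε) ^ j * |l (x / 2 ^ j)| :=
        abs_two_pow_mul_le_of_doubling hx₀ (by positivity) hdouble hy.1 j
    _ ≤ (2 ^ j) ^ ε * M := by
        rw [Real.rpow_pow_comm zero_le_two]
        gcongr
        exact hM _ hy
    _ ≤ (x / x₀) ^ ε * M := by gcongr
    _ = M * (x / x₀) ^ ε := mul_comm _ _

theorem SlowlyVarying.eventually_abs_two_mul_le (hl : SlowlyVarying l) {c : ℝ} (hc : 1 < c) :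
    ∀ᶠ x in atTop, |l (2 * x)| ≤ c * |l x| := by
  have hlim : Tendsto (fun x => l (2 * x) / l x) atTop (nhds 1) := hl 2 two_pos
  filter_upwards [hlim.eventually_const_lt zero_lt_one, hlim.eventually_le_const hc] with x hpos hle
  have hne : l x ≠ 0 := fun h => by simp [h] at hpos
  rwa [← div_le_iff₀ (abs_pos.mpr hne), ← abs_div, abs_of_pos hpos]

theorem EventuallyMonotone.exists_forall_Icc_abs_le (hl : EventuallyMonotone l) :
    ∃ x₀, ∀ a, x₀ ≤ a → ∀ b, ∀ x ∈ Set.Icc a b, |l x| ≤ max |l a| |l b| := by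
  obtain ⟨x₀, hl | hl⟩ := hl <;> refine ⟨x₀, fun a ha b x hx => ?_⟩
  · exact abs_le_max_abs_abs (hl ha (ha.trans hx.1) hx.1)
      (hl (ha.trans hx.1) (ha.trans (hx.1.trans hx.2)) hx.2)
  · rw [max_comm]
    exact abs_le_max_abs_abs (hl (ha.trans hx.1) (ha.trans (hx.1.trans hx.2)) hx.2)
      (hl ha (ha.trans hx.1) hx.1)

theorem SlowlyVarying.isBigO_rpow (hl : SlowlyVarying l) (hmono : EventuallyMonotone l) {ε : ℝ}
    (hε : 0 < ε) : l =O[atTop] fun x => x ^ ε := by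
  obtain ⟨x₁, hbdd⟩ := hmono.exists_forall_Icc_abs_le
  obtain ⟨x₂, hdouble⟩ := eventually_atTop.mp
    (hl.eventually_abs_two_mul_le (Real.one_lt_rpow one_lt_two hε))
  obtain ⟨x₀, hx₀, h₁, h₂⟩ : ∃ x₀ : ℝ, 0 < x₀ ∧ x₁ ≤ x₀ ∧ x₂ ≤ x₀ :=
    ⟨max 1 (max x₁ x₂), by simp, by simp, by simp⟩
  refine .of_bound (max |l x₀| |l (2 * x₀)| / x₀ ^ ε) ?_
  filter_upwards [eventually_ge_atTop x₀] with x hx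
  have hxpos : 0 < x := hx₀.trans_le hx
  calc ‖l x‖ ≤ max |l x₀| |l (2 * x₀)| * (x / x₀) ^ ε :=
        abs_le_mul_rpow_of_doubling hx₀ hε.le (hbdd x₀ h₁ _)
          (fun y hy => hdouble y (h₂.trans hy)) hx
    _ = max |l x₀| |l (2 * x₀)| / x₀ ^ ε * ‖x ^ ε‖ := by
        rw [Real.div_rpow hxpos.le hx₀.le, Real.norm_of_nonneg (by positivity)]
        ring

theorem integrable_rpow_of_isBigO {ν : Measure ℕ} [IsFiniteMeasure ν] {p s : ℝ}
    (hν : (fun k : ℕ => ν.real {k}) =O[atTop] fun k : ℕ => (k : ℝ) ^ (-s)) (hps : p + 1 < s) :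
    Integrable (fun k : ℕ => (k : ℝ) ^ p) ν := by
  rw [← Measure.sum_smul_dirac ν]
  refine integrable_sum_dirac (fun k => measure_ne_top ν {k}) ?_
  have hsum : Summable fun k : ℕ => (k : ℝ) ^ (p - s) := Real.summable_nat_rpow.mpr (by linarith)
  refine summable_of_isBigO_nat hsum ?_
  have hO := hν.mul (Asymptotics.isBigO_refl (fun k : ℕ => (k : ℝ) ^ p) atTop).norm_left
  refine hO.congr' .rfl ?_
  filter_upwards [eventually_gt_atTop 0] with k hk
  rw [← Real.rpow_add (by exact_mod_cast hk)]
  congr 1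
  ring

theorem integrable_rpow_of_regularlyVarying {ν : Measure ℕ} [IsFiniteMeasure ν] {p γ : ℝ}
    (hl : SlowlyVarying l) (hmono : EventuallyMonotone l)
    (hν : ∀ k : ℕ, 1 ≤ k → ν.real {k} = l k * (k : ℝ) ^ (-γ - 1)) (hp : p < γ) :
    Integrable (fun k : ℕ => (k : ℝ) ^ p) ν := by
  set ε := (γ - p) / 2 with hε
  refine integrable_rpow_of_isBigO (s := γ + 1 - ε) ?_ (by linarith)
  have hl' := (hl.isBigO_rpow hmono (ε := ε) (by linarith)).comp_tendsto
    tendsto_natCast_atTop_atTop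
  refine (hl'.mul (Asymptotics.isBigO_refl (fun k : ℕ => (k : ℝ) ^ (-γ - 1)) atTop)).congr' ?_ ?_
  · filter_upwards [eventually_ge_atTop 1] with k hk
    exact (hν k hk).symm
  · filter_upwards [eventually_gt_atTop 0] with k hk
    rw [Function.comp_apply, ← Real.rpow_add (by exact_mod_cast hk)]
    congr 1
    ring

end RegularVariation

/-! ### Averaging over the degrees -/

section Averaging

variable {n : ℕ} {ν : Measure ℕ} {p : ℝ}

theorem le_parityFix (x : Fin n → ℕ) (i : Fin n) : x i ≤ parityFix n x i := by
  rw [parityFix]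
  split_ifs <;> lia

theorem parityFix_le_two_mul {x : Fin n → ℕ} {i : Fin n} (hx : 1 ≤ x i) :
    parityFix n x i ≤ 2 * x i := by
  rw [parityFix]
  split_ifs <;> lia

theorem cmLaw_apply (W : Set ((Fin n → ℕ) × (Fin n → Fin n → ℕ))) :
    cmLaw n ν W = ∫⁻ x, uniformMatching (parityFix n x)
      {σ | (parityFix n x, cmEdges (parityFix n x) σ) ∈ W} ∂Measure.pi fun _ : Fin n => ν := by
  rw [cmLaw, iidLaw, Measure.bind_apply .of_discrete (measurable_of_countable _).aemeasurable,
    lintegral_map (measurable_of_countable _) (measurable_of_countable _)]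
  simp_rw [Measure.map_apply .of_discrete (MeasurableSet.of_discrete (s := W)), Set.preimage]

theorem ae_pi_one_le [IsProbabilityMeasure ν] (hzero : ν {0} = 0) :
    ∀ᵐ x ∂Measure.pi fun _ : Fin n => ν, ∀ i, 1 ≤ x i := by
  refine ae_all_iff.mpr fun i =>
    (measurePreserving_eval (fun _ => ν) i).quasiMeasurePreserving.ae (ae_iff.mpr ?_)
  simpa using hzero

theorem integrable_sum_comp_eval {ι α : Type*} [Fintype ι] [MeasurableSpace α] {μ : Measure α}
    [IsFiniteMeasure μ] {g : α → ℝ} (hg : Integrable g μ) :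
    Integrable (fun x => ∑ i, g (x i)) (Measure.pi fun _ : ι => μ) :=
  integrable_finsetSum _ fun _ _ => integrable_comp_eval hg

theorem integral_sum_comp_eval {ι α : Type*} [Fintype ι] [MeasurableSpace α] {μ : Measure α}
    [IsProbabilityMeasure μ] {g : α → ℝ} (hg : Integrable g μ) :
    ∫ x, ∑ i, g (x i) ∂Measure.pi (fun _ : ι => μ) = Fintype.card ι * ∫ a, g a ∂μ := by
  rw [integral_finsetSum _ fun _ _ => integrable_comp_eval hg]
  simp_rw [integral_comp_eval (μ := fun _ : ι => μ) hg.aestronglyMeasurable]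
  simp

theorem cmLaw_real_lt_erasureError_le [IsProbabilityMeasure ν] (hzero : ν {0} = 0) (hn : 4 ≤ n)
    (hp₀ : 0 ≤ p) (hp₂ : p ≤ 2) (hmom : Integrable (fun k : ℕ => (k : ℝ) ^ p) ν) {t : ℝ}
    (ht : 0 < t) :
    (cmLaw n ν).real {q | t < erasureError q.1 q.2} ≤
      2 ^ p * √(24 * (n : ℝ) ^ (-p - 1) / t) * (n * ∫ k, (k : ℝ) ^ p ∂ν) := by
  set c := √(24 * (n : ℝ) ^ (-p - 1) / t)
  have hcond : ∀ᵐ x ∂Measure.pi fun _ : Fin n => ν, uniformMatching (parityFix n x)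
      {σ | t < erasureError (parityFix n x) (cmEdges (parityFix n x) σ)} ≤
        ENNReal.ofReal (2 ^ p * c * ∑ i, (x i : ℝ) ^ p) := by
    filter_upwards [ae_pi_one_le hzero] with x hx
    rw [← ofReal_measureReal]
    refine ENNReal.ofReal_le_ofReal ?_
    calc _ ≤ c * ∑ i, (parityFix n x i : ℝ) ^ p := uniformMatching_real_lt_erasureError_le hn
          (fun i => (hx i).trans (le_parityFix x i)) hp₀ hp₂ ht
      _ ≤ c * ∑ i, (2 * x i : ℝ) ^ p := by
          gcongr with i
          exact_mod_cast parityFix_le_two_mul (hx i)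
      _ = 2 ^ p * c * ∑ i, (x i : ℝ) ^ p := by
          simp_rw [Real.mul_rpow zero_le_two (Nat.cast_nonneg _), ← Finset.mul_sum]
          ring
  have hmean := integral_sum_comp_eval (ι := Fin n) hmom
  rw [Fintype.card_fin] at hmean
  rw [← hmean, ← integral_const_mul]
  refine ENNReal.toReal_le_of_le_ofReal (by positivity) ?_
  rw [cmLaw_apply, ofReal_integral_eq_lintegral_ofReal
    ((integrable_sum_comp_eval hmom).const_mul _) (ae_of_all _ fun _ => by positivity)]
  exact lintegral_mono_ae hcond

theorem tendsto_mul_sqrt_rpow_atTop {K a : ℝ} (hK : 0 < K) (ha : 1 - p < a) :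
    Tendsto (fun n : ℕ => n * √(24 * (n : ℝ) ^ (-p - 1) / (K * (n : ℝ) ^ a))) atTop (nhds 0) := by
  have hlim : Tendsto (fun n : ℕ => √(24 / K * (n : ℝ) ^ (-(a + p - 1)))) atTop (nhds 0) := by
    have hpow : Tendsto (fun n : ℕ => (n : ℝ) ^ (-(a + p - 1))) atTop (nhds 0) :=
      (tendsto_rpow_neg_atTop (by linarith)).comp tendsto_natCast_atTop_atTop
    simpa using (hpow.const_mul (24 / K)).sqrt
  refine hlim.congr' ?_
  filter_upwards [eventually_gt_atTop 0] with n hn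
  have hn₀ : (0 : ℝ) < n := by exact_mod_cast hn
  have hexp : (n : ℝ) ^ (-(a + p - 1)) = (n : ℝ) ^ 2 * (n : ℝ) ^ (-p - 1) / (n : ℝ) ^ a := by
    rw [← Real.rpow_natCast, ← Real.rpow_add hn₀, ← Real.rpow_sub hn₀]
    congr 1
    push_cast
    ring
  nth_rw 2 [← Real.sqrt_sq hn₀.le]
  rw [← Real.sqrt_mul (by positivity), hexp]
  congr 1
  field_simp

end Averaging

theorem stmt16_general {ν : Measure ℕ} [IsProbabilityMeasure ν] (hzero : ν {0} = 0) {p : ℝ}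
    (hp₀ : 0 ≤ p) (hp₂ : p ≤ 2) (hmom : Integrable (fun k : ℕ => (k : ℝ) ^ p) ν) {K a : ℝ}
    (hK : 0 < K) (ha : 1 - p < a) :
    Tendsto (fun n : ℕ => (cmLaw n ν).real {q | K * (n : ℝ) ^ a < erasureError q.1 q.2})
      atTop (nhds 0) := by
  have hlim := (tendsto_mul_sqrt_rpow_atTop hK ha).const_mul (2 ^ p * ∫ k, (k : ℝ) ^ p ∂ν)
  rw [mul_zero] at hlim
  refine squeeze_zero' (.of_forall fun _ => measureReal_nonneg) ?_ hlim
  filter_upwards [eventually_ge_atTop 4] with n hn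
  refine (cmLaw_real_lt_erasureError_le hzero hn hp₀ hp₂ hmom (by positivity)).trans_eq ?_
  ring

/-- For `𝒟` regularly varying with exponent `γ > 1`, in the erased
configuration model: if `1 < γ < 2` then for any `K, δ > 0`,
`P(Σ_k |f̂_n(k) − f_n(k)| > K n^{1−γ+δ}) → 0`, while if `γ > 2` then for any `K, δ > 0`,
`P(Σ_k |f̂_n(k) − f_n(k)| > K n^{−1+δ}) → 0`. -/
theorem stmt16 (ν : Measure ℕ) [IsProbabilityMeasure ν] (f : ℕ → ℝ)
    (hf : ∀ k, f k = (ν {k}).toReal) (hzero : ν {0} = 0)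
    (γ : ℝ) (hγ : 1 < γ)
    (l : ℝ → ℝ) (hsv : SlowlyVarying l) (hmono : EventuallyMonotone l)
    (hreg : ∀ k : ℕ, 1 ≤ k → f k = l k * (k : ℝ) ^ (-γ - 1)) :
    (γ < 2 → ∀ K δ : ℝ, 0 < K → 0 < δ →
        Tendsto (fun n : ℕ =>
            ((cmLaw n ν) {p : (Fin n → ℕ) × (Fin n → Fin n → ℕ) |
                K * (n : ℝ) ^ (1 - γ + δ) <
                  ∑' k : ℕ, |empDens (eraseDeg p.2) k - empDens p.1 k|}).toReal)
          atTop (nhds 0)) ∧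
      (2 < γ → ∀ K δ : ℝ, 0 < K → 0 < δ →
        Tendsto (fun n : ℕ =>
            ((cmLaw n ν) {p : (Fin n → ℕ) × (Fin n → Fin n → ℕ) |
                K * (n : ℝ) ^ (-1 + δ) <
                  ∑' k : ℕ, |empDens (eraseDeg p.2) k - empDens p.1 k|}).toReal)
          atTop (nhds 0)) := by
  have hmom : ∀ {p}, p < γ → Integrable (fun k : ℕ => (k : ℝ) ^ p) ν :=
    integrable_rpow_of_regularlyVarying hsv hmono fun k hk => (hf k).symm.trans (hreg k hk)
  refine ⟨fun hγ₂ K δ hK hδ => ?_, fun hγ₂ K δ hK hδ => ?_⟩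
  · have hle : γ - δ / 2 ≤ max 1 (γ - δ / 2) := le_max_right _ _
    have hlt : max 1 (γ - δ / 2) < γ := max_lt hγ (by linarith)
    exact stmt16_general hzero (zero_le_one.trans (le_max_left _ _)) (hlt.trans hγ₂).le (hmom hlt)
      hK (by linarith)
  · exact stmt16_general hzero zero_le_two le_rfl (hmom hγ₂) hK (by linarith)

end ANNDPaper
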